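/- In the group Γ the following hold: d_i b_j d_i = c_k for every (i,j,k) ∈ C(r); f₀ b_i f₀ = c_i for every 1 ≤ i ≤ r+5; f₀ g₀ f₀ g₀ = J; and f₂ g₂ f₂ g₂ = J. -/

import Mathlib

/-- The generators `o₁, …, o_r, u₁, …, u₅` of the group `𝒫₀`. -/
inductive P0Gen (r : ℕ) : Type
  | o : Fin r → P0Gen r
  | u : Fin 5 → P0Gen r

/-- The free-group letter `o_k` (`1 ≤ k ≤ r`; junk value `1` out of range). -/
def oW (r : ℕ) (k : ℕ) : FreeGroup (P0Gen r) :=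
  if h : 1 ≤ k ∧ k ≤ r then FreeGroup.of (P0Gen.o ⟨k - 1, by omega⟩) else 1

/-- The free-group letter `u_k` (`1 ≤ k ≤ 5`; junk value `1` out of range). -/
def uW (r : ℕ) (k : ℕ) : FreeGroup (P0Gen r) :=
  if h : 1 ≤ k ∧ k ≤ 5 then FreeGroup.of (P0Gen.u ⟨k - 1, by omega⟩) else 1

/-- The relations `s² = e` for every generator `s` of `𝒫₀`. -/
def P0RelsSq (r : ℕ) : Set (FreeGroup (P0Gen r)) :=
  Set.range fun g : P0Gen r => FreeGroup.of g * FreeGroup.of g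

/-- The relations `u₃ = u₂o₁u₂`, `u₄ = u₂o₂u₂`, `u₅ = u₁u₃u₁`, `o₂ = u₁u₄u₁`,
`u₅ = o₁o_r o₁` of `𝒫₀`. -/
def P0RelsU (r : ℕ) : Set (FreeGroup (P0Gen r)) :=
  { uW r 2 * oW r 1 * uW r 2 * (uW r 3)⁻¹,
    uW r 2 * oW r 2 * uW r 2 * (uW r 4)⁻¹,
    uW r 1 * uW r 3 * uW r 1 * (uW r 5)⁻¹,
    uW r 1 * uW r 4 * uW r 1 * (oW r 2)⁻¹,
    oW r 1 * oW r r * oW r 1 * (uW r 5)⁻¹ }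

/-- The remaining conjugacy relations of `𝒫₀`: if `r` is even, `o_{1+2j} = o₁o_{2j}o₁` and
`o_{2+2j} = o₂o_{1+2j}o₂` for `j = 1, …, r/2 − 1`; if `r` is odd, `o₃ = o₂o₁o₂` together
with `o_{2+2j} = o₁o_{1+2j}o₁` and `o_{3+2j} = o₂o_{2+2j}o₂` for `j = 1, …, (r−3)/2`. -/
def P0RelsO (r : ℕ) : Set (FreeGroup (P0Gen r)) :=
  if Even r then
    ⋃ j ∈ Finset.Icc 1 (r / 2 - 1),
      ({oW r 1 * oW r (2 * j) * oW r 1 * (oW r (1 + 2 * j))⁻¹,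
        oW r 2 * oW r (1 + 2 * j) * oW r 2 * (oW r (2 + 2 * j))⁻¹} :
          Set (FreeGroup (P0Gen r)))
  else
    {oW r 2 * oW r 1 * oW r 2 * (oW r 3)⁻¹} ∪
    ⋃ j ∈ Finset.Icc 1 ((r - 3) / 2),
      ({oW r 1 * oW r (1 + 2 * j) * oW r 1 * (oW r (2 + 2 * j))⁻¹,
        oW r 2 * oW r (2 + 2 * j) * oW r 2 * (oW r (3 + 2 * j))⁻¹} :
          Set (FreeGroup (P0Gen r)))

/-- All defining relations of `𝒫₀`. -/
def P0Rels (r : ℕ) : Set (FreeGroup (P0Gen r)) := P0RelsSq r ∪ P0RelsU r ∪ P0RelsO r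

/-- The group `𝒫₀`, presented by the above generators and relations. -/
abbrev P0 (r : ℕ) : Type := PresentedGroup (P0Rels r)

/-- The relabelled generator-word `a_i` of `𝒫₀`: `a₁ = o₁`, `a₂ = o₂`, `a_{i+2} = u_i`
for `i = 1, …, 5`, and `a_j = o_{j−5}` for `j = 8, …, r+5`. -/
def aW (r : ℕ) (i : ℕ) : FreeGroup (P0Gen r) :=
  if i ≤ 2 then oW r i else if i ≤ 7 then uW r (i - 2) else oW r (i - 5)

/-- `C(r)`: the set of triples `(i,j,k)` such that `a_i a_j a_i = a_k` is one of the
conjugacy relations of `𝒫₀`. -/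
def Cset (r : ℕ) : Set (ℕ × ℕ × ℕ) :=
  {t | aW r t.1 * aW r t.2.1 * aW r t.1 * (aW r t.2.2)⁻¹ ∈ P0RelsU r ∪ P0RelsO r}

/-- The generators of the solution group `Γ`: `a_i, b_i, c_i, d_i, p_{i,1}, …, p_{i,5}`
(`1 ≤ i ≤ r+5`), `f₀, f₁, f₂, g₀, g₁, g₂, m₀, m₁, m₂`, `h_{jk}` and `q_{c,1}, …, q_{c,6}`
(one family for each `c = (i,j,k) ∈ C(r)`), together with the central generator `J`. -/
inductive GaGen (r : ℕ) : Type
  | a : Fin (r + 5) → GaGen r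
  | b : Fin (r + 5) → GaGen r
  | c : Fin (r + 5) → GaGen r
  | d : Fin (r + 5) → GaGen r
  | p : Fin (r + 5) → Fin 5 → GaGen r
  | f : Fin 3 → GaGen r
  | g : Fin 3 → GaGen r
  | m : Fin 3 → GaGen r
  | h : {t : ℕ × ℕ × ℕ // t ∈ Cset r} → GaGen r
  | q : {t : ℕ × ℕ × ℕ // t ∈ Cset r} → Fin 6 → GaGen r
  | J : GaGen r

/-- The free-group letter `a_i` of `Γ` (`1 ≤ i ≤ r+5`; junk value `1` out of range). -/
def ga (r : ℕ) (i : ℕ) : FreeGroup (GaGen r) :=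
  if h : 1 ≤ i ∧ i ≤ r + 5 then FreeGroup.of (GaGen.a ⟨i - 1, by omega⟩) else 1

/-- The free-group letter `b_i` of `Γ`. -/
def gb (r : ℕ) (i : ℕ) : FreeGroup (GaGen r) :=
  if h : 1 ≤ i ∧ i ≤ r + 5 then FreeGroup.of (GaGen.b ⟨i - 1, by omega⟩) else 1

/-- The free-group letter `c_i` of `Γ`. -/
def gc (r : ℕ) (i : ℕ) : FreeGroup (GaGen r) :=
  if h : 1 ≤ i ∧ i ≤ r + 5 then FreeGroup.of (GaGen.c ⟨i - 1, by omega⟩) else 1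

/-- The free-group letter `d_i` of `Γ`. -/
def gd (r : ℕ) (i : ℕ) : FreeGroup (GaGen r) :=
  if h : 1 ≤ i ∧ i ≤ r + 5 then FreeGroup.of (GaGen.d ⟨i - 1, by omega⟩) else 1

/-- The free-group letter `p_{i,l}` of `Γ` (`1 ≤ i ≤ r+5`, `1 ≤ l ≤ 5`). -/
def gp (r : ℕ) (i l : ℕ) : FreeGroup (GaGen r) :=
  if h : (1 ≤ i ∧ i ≤ r + 5) ∧ (1 ≤ l ∧ l ≤ 5) then
    FreeGroup.of (GaGen.p ⟨i - 1, by omega⟩ ⟨l - 1, by omega⟩) else 1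

/-- The free-group letter `f_l` of `Γ` (`0 ≤ l ≤ 2`). -/
def gf (r : ℕ) (l : ℕ) : FreeGroup (GaGen r) :=
  if h : l ≤ 2 then FreeGroup.of (GaGen.f ⟨l, by omega⟩) else 1

/-- The free-group letter `g_l` of `Γ` (`0 ≤ l ≤ 2`). -/
def gg (r : ℕ) (l : ℕ) : FreeGroup (GaGen r) :=
  if h : l ≤ 2 then FreeGroup.of (GaGen.g ⟨l, by omega⟩) else 1

/-- The free-group letter `m_l` of `Γ` (`0 ≤ l ≤ 2`). -/
def gm (r : ℕ) (l : ℕ) : FreeGroup (GaGen r) :=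
  if h : l ≤ 2 then FreeGroup.of (GaGen.m ⟨l, by omega⟩) else 1

/-- The free-group letter `h_{jk}` of `Γ`, for `(i,j,k) ∈ C(r)`. -/
def gh (r : ℕ) (t : {t : ℕ × ℕ × ℕ // t ∈ Cset r}) : FreeGroup (GaGen r) :=
  FreeGroup.of (GaGen.h t)

/-- The free-group letter `q_{c,l}` of `Γ`, for `c ∈ C(r)` and `1 ≤ l ≤ 6`. -/
def gq (r : ℕ) (t : {t : ℕ × ℕ × ℕ // t ∈ Cset r}) (l : ℕ) : FreeGroup (GaGen r) :=
  if h : 1 ≤ l ∧ l ≤ 6 then FreeGroup.of (GaGen.q t ⟨l - 1, by omega⟩) else 1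

/-- The free-group letter `J` of `Γ`. -/
def gJ (r : ℕ) : FreeGroup (GaGen r) := FreeGroup.of GaGen.J

/-- The relators of `Γ` corresponding to the linear equations of the binary linear
system: for each `1 ≤ i ≤ r+5` the relations `a_i = b_i c_i`, `a_i = f₀ d_i`,
`f₀f₁f₂ = e`, `b_i f₂ p_{i,1} = e`, `p_{i,1}p_{i,2}p_{i,3} = e`, `f₀p_{i,3}p_{i,4} = e`,
`c_i p_{i,4} p_{i,5} = e`, `f₁ p_{i,2} p_{i,5} = e`; for each `c = (i,j,k) ∈ C(r)` the
relations `h_{jk} b_j c_k = e`, `d_i q_{c,1} f₂ = e`, `b_j f₂ q_{c,2} = e`,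
`q_{c,2}q_{c,3}q_{c,4} = e`, `d_i q_{c,4} q_{c,5} = e`, `c_k q_{c,5} q_{c,6} = e`,
`q_{c,1} q_{c,3} q_{c,6} = e`; and the Magic Square relations `g₀g₁g₂ = e`,
`m₀m₁m₂ = e`, `f₀g₂m₀ = e`, `f₂g₀m₁ = e`, `f₁g₁m₂ = J`. -/
def GaRelsLin (r : ℕ) : Set (FreeGroup (GaGen r)) :=
  (⋃ i ∈ Finset.Icc 1 (r + 5),
    ({gb r i * gc r i * (ga r i)⁻¹,
      gf r 0 * gd r i * (ga r i)⁻¹,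
      gf r 0 * gf r 1 * gf r 2,
      gb r i * gf r 2 * gp r i 1,
      gp r i 1 * gp r i 2 * gp r i 3,
      gf r 0 * gp r i 3 * gp r i 4,
      gc r i * gp r i 4 * gp r i 5,
      gf r 1 * gp r i 2 * gp r i 5} : Set (FreeGroup (GaGen r)))) ∪
  (⋃ t : {t : ℕ × ℕ × ℕ // t ∈ Cset r},
    ({gh r t * gb r t.1.2.1 * gc r t.1.2.2,
      gd r t.1.1 * gq r t 1 * gf r 2,
      gb r t.1.2.1 * gf r 2 * gq r t 2,
      gq r t 2 * gq r t 3 * gq r t 4,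
      gd r t.1.1 * gq r t 4 * gq r t 5,
      gc r t.1.2.2 * gq r t 5 * gq r t 6,
      gq r t 1 * gq r t 3 * gq r t 6} : Set (FreeGroup (GaGen r)))) ∪
  ({gg r 0 * gg r 1 * gg r 2,
    gm r 0 * gm r 1 * gm r 2,
    gf r 0 * gg r 2 * gm r 0,
    gf r 2 * gg r 0 * gm r 1,
    gf r 1 * gg r 1 * gm r 2 * (gJ r)⁻¹} : Set (FreeGroup (GaGen r)))

/-- All defining relations of `Γ`: `s² = e` for every generator (including `J² = e`),
`J s J s = e` for every generator `s ≠ J`, and the linear relators above. -/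
def GaRels (r : ℕ) : Set (FreeGroup (GaGen r)) :=
  (Set.range fun s : GaGen r => FreeGroup.of s * FreeGroup.of s) ∪
  ((fun s : GaGen r => gJ r * FreeGroup.of s * gJ r * FreeGroup.of s) ''
    {s : GaGen r | s ≠ GaGen.J}) ∪
  GaRelsLin r

/-- The solution group `Γ`, presented by the above generators and relations. -/
abbrev Ga (r : ℕ) : Type := PresentedGroup (GaRels r)

theorem aux_inv3 {G : Type*} [Group G] {x y z : G} (hx : x * x = 1) (hy : y * y = 1)
    (hz : z * z = 1) (h : x * y * z = 1) : x * y = z ∧ y * x = z ∧ y * z = x ∧ z * y = x ∧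
      z * x = y ∧ x * z = y := by
  have ix : x⁻¹ = x := inv_eq_of_mul_eq_one_left hx
  have iy : y⁻¹ = y := inv_eq_of_mul_eq_one_left hy
  have iz : z⁻¹ = z := inv_eq_of_mul_eq_one_left hz
  have h1 : x * y = z := by rw [← iz]; exact eq_inv_of_mul_eq_one_left h
  have h2 : y * x = z := by rw [← iz, ← h1, mul_inv_rev, ix, iy]
  refine ⟨h1, h2, ?_, ?_, ?_, ?_⟩
  · rw [← h2, ← mul_assoc, hy, one_mul]
  · rw [← h1, mul_assoc, hy, mul_one]
  · rw [← h2, mul_assoc, hx, mul_one]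
  · rw [← h1, ← mul_assoc, hx, one_mul]

theorem aux_magic {G : Type*} [Group G] {f0 f1 f2 g0 g1 g2 m0 m1 m2 J : G}
    (hf0 : f0 * f0 = 1) (hf1 : f1 * f1 = 1) (hf2 : f2 * f2 = 1)
    (hg0 : g0 * g0 = 1) (hg1 : g1 * g1 = 1) (hg2 : g2 * g2 = 1)
    (hm0 : m0 * m0 = 1) (hm1 : m1 * m1 = 1) (hm2 : m2 * m2 = 1) (hJ : J * J = 1)
    (cJ : ∀ x : G, x * x = 1 → J * x * J * x = 1 → J * x = x * J)
    (cf0 : J * f0 * J * f0 = 1) (cf2 : J * f2 * J * f2 = 1)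
    (hf : f0 * f1 * f2 = 1) (hg : g0 * g1 * g2 = 1) (hm : m0 * m1 * m2 = 1)
    (h0 : f0 * g2 * m0 = 1) (h1 : f2 * g0 * m1 = 1) (h2 : f1 * g1 * m2 * J⁻¹ = 1) :
    f0 * g0 * f0 * g0 = J ∧ f2 * g2 * f2 * g2 = J := by
  have iJ : J⁻¹ = J := inv_eq_of_mul_eq_one_left hJ
  have c0 := cJ f0 hf0 cf0
  have c2 := cJ f2 hf2 cf2
  obtain ⟨-, -, -, -, f20, f02⟩ := aux_inv3 hf0 hf1 hf2 hf
  obtain ⟨g01, -, g12, g21, g20, g02⟩ := aux_inv3 hg0 hg1 hg2 hg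
  obtain ⟨m01, m10, -⟩ := aux_inv3 hm0 hm1 hm2 hm
  obtain ⟨fg, gf', -⟩ := aux_inv3 hf0 hg2 hm0 h0
  obtain ⟨fg2, gf2, -⟩ := aux_inv3 hf2 hg0 hm1 h1
  have g10 : g1 * g0 = g2 := by rw [← g20, mul_assoc, hg0, mul_one]
  have h2' : f1 * g1 * m2 = J := mul_inv_eq_one.mp h2
  have K (x : G) (hx : x * x = 1) (y : G) : x * (x * y) = y := by
    rw [← mul_assoc, hx, one_mul]
  constructor
  · -- use m2 = m0 * m1 = (g2 f0)(g0 f2)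
    have e : f1 * g1 * m2 = f2 * (f0 * g0 * f0 * g0) * f2 := by
      rw [← m01, ← gf', ← gf2, ← f20]
      calc f2 * f0 * g1 * (g2 * f0 * (g0 * f2))
          = f2 * f0 * (g1 * g2) * f0 * g0 * f2 := by simp only [mul_assoc]
        _ = _ := by rw [g12]; simp only [mul_assoc]
    have e' : f2 * J * f2 = f0 * g0 * f0 * g0 := by
      rw [← h2', e]; simp only [mul_assoc, hf2, mul_one, K f2 hf2]
    rw [← e', ← c2, mul_assoc, hf2, mul_one]
  · have e : f1 * g1 * m2 = f0 * (f2 * g2 * f2 * g2) * f0 := by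
      rw [← m10, ← gf', ← gf2, ← f02]
      calc f0 * f2 * g1 * (g0 * f2 * (g2 * f0))
          = f0 * f2 * (g1 * g0) * f2 * g2 * f0 := by simp only [mul_assoc]
        _ = _ := by rw [g10]; simp only [mul_assoc]
    have e' : f0 * J * f0 = f2 * g2 * f2 * g2 := by
      rw [← h2', e]; simp only [mul_assoc, hf0, mul_one, K f0 hf0]
    rw [← e', ← c0, mul_assoc, hf0, mul_one]

theorem aux_p {G : Type*} [Group G] {f0 f1 f2 b c p1 p2 p3 p4 p5 : G}
    (hf0 : f0 * f0 = 1) (hf1 : f1 * f1 = 1) (hf2 : f2 * f2 = 1)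
    (hb : b * b = 1) (hc : c * c = 1) (hp1 : p1 * p1 = 1) (hp2 : p2 * p2 = 1)
    (hp3 : p3 * p3 = 1) (hp4 : p4 * p4 = 1) (hp5 : p5 * p5 = 1)
    (hf : f0 * f1 * f2 = 1) (h1 : b * f2 * p1 = 1) (h2 : p1 * p2 * p3 = 1)
    (h3 : f0 * p3 * p4 = 1) (h4 : c * p4 * p5 = 1) (h5 : f1 * p2 * p5 = 1) :
    f0 * b * f0 = c := by
  have e1 := (aux_inv3 hc hp4 hp5 h4).2.2.1
  have e2 := (aux_inv3 hf0 hp3 hp4 h3).1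
  have e3 := (aux_inv3 hp1 hp2 hp3 h2).1
  have e4 := (aux_inv3 hf1 hp2 hp5 h5).2.2.1
  have e5 := (aux_inv3 hb hf2 hp1 h1).1
  have e6 := (aux_inv3 hf0 hf1 hf2 hf).2.2.2.1
  calc f0 * b * f0 = f0 * (b * (f2 * f1)) := by rw [e6, mul_assoc]
    _ = f0 * ((b * f2) * (p2 * p5)) := by rw [e4, mul_assoc b]
    _ = f0 * (p1 * p2) * p5 := by rw [e5]; simp only [mul_assoc]
    _ = c := by rw [e3, e2, e1]

theorem aux_q {G : Type*} [Group G] {d f2 b c q1 q2 q3 q4 q5 q6 : G}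
    (hd : d * d = 1) (hf2 : f2 * f2 = 1)
    (hb : b * b = 1) (hc : c * c = 1) (hq1 : q1 * q1 = 1) (hq2 : q2 * q2 = 1)
    (hq3 : q3 * q3 = 1) (hq4 : q4 * q4 = 1) (hq5 : q5 * q5 = 1) (hq6 : q6 * q6 = 1)
    (h1 : d * q1 * f2 = 1) (h2 : b * f2 * q2 = 1) (h3 : q2 * q3 * q4 = 1)
    (h4 : d * q4 * q5 = 1) (h5 : c * q5 * q6 = 1) (h6 : q1 * q3 * q6 = 1) :
    d * b * d = c := by
  have e1 := (aux_inv3 hc hq5 hq6 h5).2.2.1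
  have e2 := (aux_inv3 hd hq4 hq5 h4).1
  have e3 := (aux_inv3 hq2 hq3 hq4 h3).1
  have e4 := (aux_inv3 hq1 hq3 hq6 h6).2.2.2.2.2
  have e4' := (aux_inv3 hq1 hq3 hq6 h6).2.2.1
  have e5 := (aux_inv3 hb hf2 hq2 h2).1
  have e6 := (aux_inv3 hd hq1 hf2 h1).2.2.2.1
  calc d * b * d = d * (b * (f2 * q1)) := by rw [e6, mul_assoc]
    _ = d * ((b * f2) * (q3 * q6)) := by rw [e4', mul_assoc b]
    _ = d * (q2 * q3) * q6 := by rw [e5]; simp only [mul_assoc]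
    _ = c := by rw [e3, e2, e1]

theorem aux_sq (r : ℕ) (s : GaGen r) : PresentedGroup.mk (GaRels r) (FreeGroup.of s) *
    PresentedGroup.mk (GaRels r) (FreeGroup.of s) = 1 := by
  rw [← map_mul]
  exact PresentedGroup.one_of_mem (Or.inl (Or.inl ⟨s, rfl⟩))

theorem aux_comm (r : ℕ) (s : GaGen r) (hs : s ≠ GaGen.J) :
    PresentedGroup.mk (GaRels r) (gJ r) * PresentedGroup.mk (GaRels r) (FreeGroup.of s) *
      PresentedGroup.mk (GaRels r) (gJ r) *
    PresentedGroup.mk (GaRels r) (FreeGroup.of s) = 1 := by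
  simp only [← map_mul]
  exact PresentedGroup.one_of_mem (Or.inl (Or.inr ⟨s, hs, rfl⟩))

theorem aux_lin (r : ℕ) {w : FreeGroup (GaGen r)} (hw : w ∈ GaRelsLin r) :
    PresentedGroup.mk (GaRels r) w = 1 :=
  PresentedGroup.one_of_mem (Or.inr hw)

theorem aux_sq_b (r : ℕ) (i : ℕ) : PresentedGroup.mk (GaRels r) (gb r i) *
    PresentedGroup.mk (GaRels r) (gb r i) = 1 := by
  unfold gb
  split
  · exact aux_sq r _
  · simp

theorem aux_sq_c (r : ℕ) (i : ℕ) : PresentedGroup.mk (GaRels r) (gc r i) *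
    PresentedGroup.mk (GaRels r) (gc r i) = 1 := by
  unfold gc
  split
  · exact aux_sq r _
  · simp

theorem aux_sq_d (r : ℕ) (i : ℕ) : PresentedGroup.mk (GaRels r) (gd r i) *
    PresentedGroup.mk (GaRels r) (gd r i) = 1 := by
  unfold gd
  split
  · exact aux_sq r _
  · simp

theorem aux_sq_p (r : ℕ) (i l : ℕ) : PresentedGroup.mk (GaRels r) (gp r i l) *
    PresentedGroup.mk (GaRels r) (gp r i l) = 1 := by
  unfold gp
  split
  · exact aux_sq r _
  · simp

theorem aux_sq_f (r : ℕ) (i : ℕ) : PresentedGroup.mk (GaRels r) (gf r i) *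
    PresentedGroup.mk (GaRels r) (gf r i) = 1 := by
  unfold gf
  split
  · exact aux_sq r _
  · simp

theorem aux_sq_g (r : ℕ) (i : ℕ) : PresentedGroup.mk (GaRels r) (gg r i) *
    PresentedGroup.mk (GaRels r) (gg r i) = 1 := by
  unfold gg
  split
  · exact aux_sq r _
  · simp

theorem aux_sq_m (r : ℕ) (i : ℕ) : PresentedGroup.mk (GaRels r) (gm r i) *
    PresentedGroup.mk (GaRels r) (gm r i) = 1 := by
  unfold gm
  split
  · exact aux_sq r _
  · simp

theorem aux_sq_q (r : ℕ) (t : {t : ℕ × ℕ × ℕ // t ∈ Cset r}) (l : ℕ) : PresentedGroup.mk (GaRels r) (gq r t l) *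
    PresentedGroup.mk (GaRels r) (gq r t l) = 1 := by
  unfold gq
  split
  · exact aux_sq r _
  · simp

/-- In the solution group `Γ`: `d_i b_j d_i = c_k` for every
`(i,j,k) ∈ C(r)`; `f₀ b_i f₀ = c_i` for every `1 ≤ i ≤ r+5`; `f₀g₀f₀g₀ = J`; and
`f₂g₂f₂g₂ = J`. -/
theorem stmt_6 (r : ℕ) (hr : 2 ≤ r) :
    (∀ i j k : ℕ, (i, j, k) ∈ Cset r →
      PresentedGroup.mk (GaRels r) (gd r i * gb r j * gd r i) =
        PresentedGroup.mk (GaRels r) (gc r k)) ∧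
    (∀ i ∈ Finset.Icc 1 (r + 5),
      PresentedGroup.mk (GaRels r) (gf r 0 * gb r i * gf r 0) =
        PresentedGroup.mk (GaRels r) (gc r i)) ∧
    PresentedGroup.mk (GaRels r) (gf r 0 * gg r 0 * gf r 0 * gg r 0) =
      PresentedGroup.mk (GaRels r) (gJ r) ∧
    PresentedGroup.mk (GaRels r) (gf r 2 * gg r 2 * gf r 2 * gg r 2) =
      PresentedGroup.mk (GaRels r) (gJ r) := by
  have Li : ∀ i ∈ Finset.Icc 1 (r + 5), ∀ w ∈
    ({gb r i * gc r i * (ga r i)⁻¹,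
      gf r 0 * gd r i * (ga r i)⁻¹,
      gf r 0 * gf r 1 * gf r 2,
      gb r i * gf r 2 * gp r i 1,
      gp r i 1 * gp r i 2 * gp r i 3,
      gf r 0 * gp r i 3 * gp r i 4,
      gc r i * gp r i 4 * gp r i 5,
      gf r 1 * gp r i 2 * gp r i 5} : Set (FreeGroup (GaGen r))),
      PresentedGroup.mk (GaRels r) w = 1 := fun i hi w hw =>
    aux_lin r (Or.inl (Or.inl (Set.mem_biUnion (by simpa using hi) hw)))
  have Lm : ∀ w ∈ ({gg r 0 * gg r 1 * gg r 2,
    gm r 0 * gm r 1 * gm r 2,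
    gf r 0 * gg r 2 * gm r 0,
    gf r 2 * gg r 0 * gm r 1,
    gf r 1 * gg r 1 * gm r 2 * (gJ r)⁻¹} : Set (FreeGroup (GaGen r))),
      PresentedGroup.mk (GaRels r) w = 1 := fun w hw => aux_lin r (Or.inr hw)
  have hf : PresentedGroup.mk (GaRels r) (gf r 0 * gf r 1 * gf r 2) = 1 :=
    Li 1 (by simp) _ (by simp)
  refine ⟨fun i j k ht => ?_, fun i hi => ?_, ?_⟩
  · have Lq := fun w hw => aux_lin r (w := w)
      (Or.inl (Or.inr (Set.mem_iUnion.mpr ⟨⟨(i, j, k), ht⟩, hw⟩)))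
    simp only [Set.mem_insert_iff, Set.mem_singleton_iff, forall_eq_or_imp, forall_eq,
      map_mul] at Lq
    obtain ⟨-, h1, h2, h3, h4, h5, h6⟩ := Lq
    simp only [map_mul]
    exact aux_q (aux_sq_d r _) (aux_sq_f r _) (aux_sq_b r _) (aux_sq_c r _) (aux_sq_q r _ _)
      (aux_sq_q r _ _) (aux_sq_q r _ _) (aux_sq_q r _ _) (aux_sq_q r _ _) (aux_sq_q r _ _)
      h1 h2 h3 h4 h5 h6
  · have L := Li i hi
    simp only [Set.mem_insert_iff, Set.mem_singleton_iff, forall_eq_or_imp, forall_eq,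
      map_mul] at L
    obtain ⟨-, -, h0, h1, h2, h3, h4, h5⟩ := L
    simp only [map_mul]
    exact aux_p (aux_sq_f r _) (aux_sq_f r _) (aux_sq_f r _) (aux_sq_b r _) (aux_sq_c r _)
      (aux_sq_p r _ _) (aux_sq_p r _ _) (aux_sq_p r _ _) (aux_sq_p r _ _) (aux_sq_p r _ _)
      h0 h1 h2 h3 h4 h5
  · simp only [Set.mem_insert_iff, Set.mem_singleton_iff, forall_eq_or_imp, forall_eq,
      map_mul, map_inv] at Lm
    obtain ⟨h1, h2, h3, h4, h5⟩ := Lm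
    simp only [map_mul] at hf ⊢
    have hJ : PresentedGroup.mk (GaRels r) (gJ r) * PresentedGroup.mk (GaRels r) (gJ r) = 1 :=
      aux_sq r _
    refine aux_magic (aux_sq_f r _) (aux_sq_f r _) (aux_sq_f r _) (aux_sq_g r _) (aux_sq_g r _)
      (aux_sq_g r _) (aux_sq_m r _) (aux_sq_m r _) (aux_sq_m r _) hJ ?_
      (aux_comm r (GaGen.f 0) (by simp)) (aux_comm r (GaGen.f 2) (by simp)) hf h1 h2 h3 h4 h5
    intro x hx h
    have ix : x⁻¹ = x := inv_eq_of_mul_eq_one_left hx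
    have iJ := inv_eq_of_mul_eq_one_left hJ
    rw [mul_assoc] at h
    have := eq_inv_of_mul_eq_one_left h
    rw [this, mul_inv_rev, ix, iJ]
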